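/- For every integer n ≥ 1 and every real number y ≥ 1, B_n(y) − B_n({y}) ≥ (y − 1)^n − {y}^n, where {y} = y − ⌊y⌋ is the fractional part of y. -/

import Mathlib

/-- The `n`-th Bernoulli polynomial evaluated at a real argument. -/
noncomputable def BernoulliR (n : ℕ) (x : ℝ) : ℝ :=
  Polynomial.aeval x (Polynomial.bernoulli n)

theorem aux_step (x : ℝ) (n : ℕ) : BernoulliR n (1 + x) = BernoulliR n x + n * x ^ (n - 1) := by
  have h := congrArg (Polynomial.aeval x) (Polynomial.bernoulli_comp_one_add_X n)
  simpa [BernoulliR, Polynomial.aeval_comp] using h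

theorem aux_pow (a : ℝ) (ha : 0 ≤ a) (k : ℕ) :
    (1 + a) ^ (k + 1) - a ^ (k + 1) ≤ ((k + 1 : ℕ) : ℝ) * (1 + a) ^ k := by
  induction k with
  | zero => simp
  | succ k ih =>
    have h1 : a ^ (k + 1) ≤ (1 + a) ^ (k + 1) := pow_le_pow_left₀ ha (by linarith) _
    have h2 := mul_le_mul_of_nonneg_left ih (show 0 ≤ 1 + a by linarith)
    have e : (1 + a) ^ (k + 1 + 1) - a ^ (k + 1 + 1)
        = (1 + a) * ((1 + a) ^ (k + 1) - a ^ (k + 1)) + a ^ (k + 1) := by ring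
    rw [e]
    push_cast at h2 ⊢
    have e2 : (1 + a) * (((k : ℝ) + 1) * (1 + a) ^ k) = ((k : ℝ) + 1) * (1 + a) ^ (k + 1) := by ring
    linarith

theorem aux_main (f : ℝ) (hf : 0 ≤ f) (k m : ℕ) :
    (f + m) ^ (k + 1) - f ^ (k + 1) ≤ BernoulliR (k + 1) (1 + (f + m)) - BernoulliR (k + 1) f := by
  induction m with
  | zero =>
    rw [aux_step]
    simp
    positivity
  | succ m ih =>
    have h := aux_pow (f + m) (by positivity) k
    have e : f + ((m + 1 : ℕ) : ℝ) = 1 + (f + m) := by push_cast; ring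
    rw [e, aux_step _ (k + 1), Nat.add_sub_cancel]
    linarith

/-- For `n ≥ 1` and real `y ≥ 1`, `B_n(y) - B_n({y}) ≥ (y - 1)^n - {y}^n`. -/
theorem bernoulli_sub_bernoulli_fract_lower (n : ℕ) (hn : 1 ≤ n) (y : ℝ) (hy : 1 ≤ y) :
    (y - 1) ^ n - Int.fract y ^ n ≤ BernoulliR n y - BernoulliR n (Int.fract y) := by
  obtain ⟨k, rfl⟩ := Nat.exists_eq_add_of_le' hn
  have h1 : (1 : ℤ) ≤ ⌊y⌋ := Int.le_floor.2 (by simpa using hy)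
  obtain ⟨m, hm⟩ := Int.eq_ofNat_of_zero_le (sub_nonneg.2 h1)
  have hm' : (⌊y⌋ : ℝ) = m + 1 := by
    have : ⌊y⌋ = (m : ℤ) + 1 := by omega
    rw [this]; push_cast; rfl
  have h := aux_main (Int.fract y) (Int.fract_nonneg y) k m
  have e : Int.fract y + m = y - 1 := by
    have := Int.fract_add_floor y
    linarith
  rw [e, show 1 + (y - 1) = y by ring] at h
  exact h
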